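/- arXiv:1801.06334 — 3 statements merged into one kernel-verified Lean document; each statement's English description precedes it below -/
import Mathlib

section
/- For every n ∈ ℕ, the number of dissection diagrams of degree n equals (1/(2n+1))·binomial(3n, n); equivalently, (2n+1) times the number of dissection diagrams of degree n equals binomial(3n, n). -/
/-- Two chords of the `(n+1)`-gon (unordered pairs of vertices) cross:
writing the first one as `{a,b}` and the second as `{c,d}`, they cross when
`a < c < b < d` or `c < a < d < b`. -/
def Crosses {m : ℕ} (c₁ c₂ : Sym2 (Fin m)) : Prop :=
  ∃ a b c d : Fin m, c₁ = s(a, b) ∧ c₂ = s(c, d) ∧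
    ((a < c ∧ c < b ∧ b < d) ∨ (c < a ∧ a < d ∧ d < b))

/-- A dissection diagram of degree `n`: a set of `n` chords of the `(n+1)`-gon
(2-element subsets of the vertex set `{0,…,n}`), pairwise non-crossing, whose
associated graph on the vertices is acyclic. -/
def IsDissection {n : ℕ} (C : Finset (Sym2 (Fin (n + 1)))) : Prop :=
  C.card = n ∧ (∀ e ∈ C, ¬ e.IsDiag) ∧
    (∀ e₁ ∈ C, ∀ e₂ ∈ C, ¬ Crosses e₁ e₂) ∧
    (SimpleGraph.fromEdgeSet (↑C : Set (Sym2 (Fin (n + 1))))).IsAcyclic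

/-- The number of dissection diagrams of degree `n`. -/
noncomputable def numDissection (n : ℕ) : ℕ :=
  Nat.card {C : Finset (Sym2 (Fin (n + 1))) // IsDissection C}

namespace NCTree

/-- `x` is in every `E`-closed set containing `a`. -/
def Conn (E : Finset (ℕ × ℕ)) (a x : ℕ) : Prop :=
  ∀ P : ℕ → Prop, P a → (∀ c d, (c, d) ∈ E → (P c ↔ P d)) → P x

theorem Conn.refl (E : Finset (ℕ × ℕ)) (a : ℕ) : Conn E a a := fun _ h _ => h

theorem Conn.symm {E : Finset (ℕ × ℕ)} {a x : ℕ} (h : Conn E a x) : Conn E x a := by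
  intro P hx hP
  by_contra ha
  exact h (fun y => ¬ P y) ha (fun c d hcd => not_congr (hP c d hcd)) hx

theorem Conn.trans {E : Finset (ℕ × ℕ)} {a b c : ℕ} (h : Conn E a b) (h' : Conn E b c) :
    Conn E a c := fun P ha hP => h' P (h P ha hP) hP

theorem conn_edge {E : Finset (ℕ × ℕ)} {a c d : ℕ} (h : (c, d) ∈ E) :
    Conn E a c ↔ Conn E a d :=
  ⟨fun k P ha hP => (hP c d h).1 (k P ha hP), fun k P ha hP => (hP c d h).2 (k P ha hP)⟩

/-- A connected set has at most one more vertex than edges. -/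
theorem card_le (E : Finset (ℕ × ℕ)) (S : Finset ℕ) (a : ℕ) (haS : a ∈ S)
    (h : ∀ x ∈ S, Conn E a x) (hE : ∀ c d, (c, d) ∈ E → c ∈ S ∧ d ∈ S) :
    S.card ≤ E.card + 1 := by
  classical
  let good : Finset (Finset ℕ) := S.powerset.filter (fun R => a ∈ R ∧
    R.card ≤ (E.filter (fun e => e.1 ∈ R ∧ e.2 ∈ R)).card + 1)
  have hne : good.Nonempty := ⟨{a}, by simp [good, haS]⟩
  obtain ⟨R, hR, hmax⟩ := good.exists_max_image Finset.card hne
  simp only [good, Finset.mem_filter, Finset.mem_powerset] at hR hmax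
  obtain ⟨hRS, haR, hc⟩ := hR
  have key : ∀ c d z, (c, d) ∈ E → z ∈ S → z ∉ R → (c = z ∧ d ∈ R ∨ d = z ∧ c ∈ R) → False := by
    intro c d z hcd hzS hz hor
    have hlt : (E.filter (fun e => e.1 ∈ R ∧ e.2 ∈ R)).card <
        (E.filter (fun e => e.1 ∈ insert z R ∧ e.2 ∈ insert z R)).card := by
      apply Finset.card_lt_card
      rw [Finset.ssubset_iff_of_subset]
      · refine ⟨(c, d), ?_, ?_⟩
        · simp only [Finset.mem_filter, Finset.mem_insert]
          rcases hor with ⟨rfl, h⟩ | ⟨rfl, h⟩ <;> simp [hcd, h]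
        · simp only [Finset.mem_filter]
          rcases hor with ⟨rfl, h⟩ | ⟨rfl, h⟩ <;> simp [hz]
      · intro e he
        simp only [Finset.mem_filter, Finset.mem_insert] at he ⊢
        tauto
    have h2 := Finset.card_insert_of_notMem hz
    have := hmax (insert z R) ⟨Finset.insert_subset hzS hRS, by simp [haR], by omega⟩
    omega
  have hall : S ⊆ R := by
    intro x hx
    apply h x hx (fun y => y ∈ R) haR
    intro c d hcd
    constructor
    · intro hcR
      by_contra hd
      exact key c d d hcd (hE c d hcd).2 hd (Or.inr ⟨rfl, hcR⟩)
    · intro hdR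
      by_contra hd
      exact key c d c hcd (hE c d hcd).1 hd (Or.inl ⟨rfl, hdR⟩)
  have h1 := Finset.card_le_card hall
  have h2 := Finset.card_filter_le E (fun e => e.1 ∈ R ∧ e.2 ∈ R)
  omega

/-- Noncrossing trees on `[a,b]`. -/
structure NCT (a b : ℕ) (E : Finset (ℕ × ℕ)) : Prop where
  range : ∀ c d, (c, d) ∈ E → a ≤ c ∧ c < d ∧ d ≤ b
  nc : ∀ c d c' d', (c, d) ∈ E → (c', d') ∈ E → ¬ (c < c' ∧ c' < d ∧ d < d')
  conn : ∀ x, a ≤ x → x ≤ b → Conn E a x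
  card : E.card + a = b

theorem card_ge {a b : ℕ} {E : Finset (ℕ × ℕ)} (hab : a ≤ b)
    (h1 : ∀ c d, (c, d) ∈ E → a ≤ c ∧ c < d ∧ d ≤ b)
    (h2 : ∀ x, a ≤ x → x ≤ b → Conn E a x) : b ≤ E.card + a := by
  have := card_le E (Finset.Icc a b) a (by simp [hab]) (fun x hx => by
    simp at hx; exact h2 x hx.1 hx.2) (fun c d h => by
    have := h1 c d h
    simp; omega)
  simp at this
  omega

/-- Gluing three trees. -/
def glue (a v : ℕ) (A B C : Finset (ℕ × ℕ)) : Finset (ℕ × ℕ) := insert (a, v) (A ∪ B ∪ C)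

theorem mem_glue {a v : ℕ} {A B C : Finset (ℕ × ℕ)} {e : ℕ × ℕ} :
    e ∈ glue a v A B C ↔ e = (a, v) ∨ e ∈ A ∨ e ∈ B ∨ e ∈ C := by
  simp [glue]

theorem glue_nct {a i v b : ℕ} {A B C : Finset (ℕ × ℕ)} (hA : NCT a i A) (hB : NCT (i + 1) v B)
    (hC : NCT v b C) : NCT a b (glue a v A B C) := by
  have hcA := hA.card
  have hcB := hB.card
  have hcC := hC.card
  refine ⟨?_, ?_, ?_, ?_⟩
  · intro c d h
    rw [mem_glue] at h
    rcases h with h | h | h | h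
    · simp only [Prod.mk.injEq] at h; omega
    · have := hA.range c d h; omega
    · have := hB.range c d h; omega
    · have := hC.range c d h; omega
  · intro c d c' d' h h'
    rw [mem_glue] at h h'
    simp only [Prod.mk.injEq] at h h'
    rcases h with h | h | h | h <;> rcases h' with h' | h' | h' | h'
    · omega
    · have := hA.range _ _ h'; omega
    · have := hB.range _ _ h'; omega
    · have := hC.range _ _ h'; omega
    · have := hA.range _ _ h; omega
    · exact hA.nc _ _ _ _ h h'
    · have := hA.range _ _ h; have := hB.range _ _ h'; omega
    · have := hA.range _ _ h; have := hC.range _ _ h'; omega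
    · have := hB.range _ _ h; omega
    · have := hB.range _ _ h; have := hA.range _ _ h'; omega
    · exact hB.nc _ _ _ _ h h'
    · have := hB.range _ _ h; have := hC.range _ _ h'; omega
    · have := hC.range _ _ h; omega
    · have := hC.range _ _ h; have := hA.range _ _ h'; omega
    · have := hC.range _ _ h; have := hB.range _ _ h'; omega
    · exact hC.nc _ _ _ _ h h'
  · intro x hax hxb P ha hP
    have pA : ∀ y, a ≤ y → y ≤ i → P y := fun y h1 h2 =>
      hA.conn y h1 h2 P ha (fun c d h => hP c d (mem_glue.2 (by tauto)))
    have pv : P v := (hP a v (mem_glue.2 (by tauto))).1 ha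
    have pi : P (i + 1) := (hB.conn v (by omega) le_rfl).symm P pv
      (fun c d h => hP c d (mem_glue.2 (by tauto)))
    have pB : ∀ y, i + 1 ≤ y → y ≤ v → P y := fun y h1 h2 =>
      hB.conn y h1 h2 P pi (fun c d h => hP c d (mem_glue.2 (by tauto)))
    have pC : ∀ y, v ≤ y → y ≤ b → P y := fun y h1 h2 =>
      hC.conn y h1 h2 P pv (fun c d h => hP c d (mem_glue.2 (by tauto)))
    by_cases h1 : x ≤ i
    · exact pA x hax h1
    · by_cases h2 : x ≤ v
      · exact pB x (by omega) h2
      · exact pC x (by omega) hxb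
  · have d1 : Disjoint A B := Finset.disjoint_left.2 (fun ⟨c, d⟩ h h' => by
      have := hA.range _ _ h; have := hB.range _ _ h'; omega)
    have d2 : Disjoint (A ∪ B) C := Finset.disjoint_left.2 (fun ⟨c, d⟩ h h' => by
      have := hC.range _ _ h'
      rcases Finset.mem_union.1 h with h | h
      · have := hA.range _ _ h; omega
      · have := hB.range _ _ h; omega)
    have d3 : (a, v) ∉ A ∪ B ∪ C := by
      simp only [Finset.mem_union]
      rintro ((h | h) | h)
      · have := hA.range _ _ h; omega
      · have := hB.range _ _ h; omega
      · have := hC.range _ _ h; omega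
    rw [glue, Finset.card_insert_of_notMem d3, Finset.card_union_of_disjoint d2,
      Finset.card_union_of_disjoint d1]
    omega

theorem glue_filter {a i v b : ℕ} {A B C : Finset (ℕ × ℕ)} (hA : NCT a i A)
    (hB : NCT (i + 1) v B) (hC : NCT v b C) :
    A = (glue a v A B C).filter (fun e => e.2 ≤ i) ∧
    B = (glue a v A B C).filter (fun e => i < e.1 ∧ e.2 ≤ v) ∧
    C = (glue a v A B C).filter (fun e => v ≤ e.1) := by
  have hcA := hA.card
  have hcB := hB.card
  have hcC := hC.card
  refine ⟨?_, ?_, ?_⟩ <;>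
  · ext ⟨c, d⟩
    rw [Finset.mem_filter, mem_glue]
    have h1 := hA.range c d
    have h2 := hB.range c d
    have h3 := hC.range c d
    simp only [Prod.mk.injEq]
    constructor
    · intro h
      refine ⟨by tauto, ?_⟩
      first | have := h1 h; omega | have := h2 h; omega | have := h3 h; omega
    · rintro ⟨h | h | h | h, h'⟩
      · omega
      · first | exact h | (have := h1 h; omega)
      · first | exact h | (have := h2 h; omega)
      · first | exact h | (have := h3 h; omega)

theorem glue_v_le {a i v b v' : ℕ} {A B C A' B' C' : Finset (ℕ × ℕ)} (hA : NCT a i A)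
    (hB : NCT (i + 1) v B) (hC : NCT v b C)
    (h : glue a v A B C = glue a v' A' B' C') : v' ≤ v := by
  have hcA := hA.card
  have hcB := hB.card
  have : (a, v') ∈ glue a v A B C := by rw [h, mem_glue]; tauto
  rw [mem_glue] at this
  rcases this with h | h | h | h
  · simp only [Prod.mk.injEq] at h; omega
  · have := hA.range _ _ h; omega
  · have := hB.range _ _ h; omega
  · have := hC.range _ _ h; omega

theorem glue_i_le {a i v b i' : ℕ} {A B C A' B' C' : Finset (ℕ × ℕ)} (hA : NCT a i A)
    (hB : NCT (i + 1) v B) (hC : NCT v b C) (hA' : NCT a i' A') (hB' : NCT (i' + 1) v B')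
    (h : glue a v A B C = glue a v A' B' C') : i' ≤ i := by
  have hcA := hA.card
  have hcB := hB.card
  have hcA' := hA'.card
  have hcB' := hB'.card
  refine hA'.conn i' (by omega) le_rfl (fun y => y ≤ i) (by omega) ?_
  intro c d hcd
  have hr' := hA'.range _ _ hcd
  have : (c, d) ∈ glue a v A B C := by rw [h, mem_glue]; tauto
  rw [mem_glue] at this
  rcases this with h | h | h | h
  · simp only [Prod.mk.injEq] at h; omega
  · have := hA.range _ _ h; omega
  · have := hB.range _ _ h; omega
  · have := hC.range _ _ h; omega

theorem glue_inj {a i v b i' v' : ℕ} {A B C A' B' C' : Finset (ℕ × ℕ)} (hA : NCT a i A)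
    (hB : NCT (i + 1) v B) (hC : NCT v b C) (hA' : NCT a i' A') (hB' : NCT (i' + 1) v' B')
    (hC' : NCT v' b C')
    (h : glue a v A B C = glue a v' A' B' C') :
    i = i' ∧ v = v' ∧ A = A' ∧ B = B' ∧ C = C' := by
  obtain rfl : v = v' := le_antisymm (glue_v_le hA' hB' hC' h.symm) (glue_v_le hA hB hC h)
  obtain rfl : i = i' := le_antisymm (glue_i_le (b := b) hA' hB' hC' hA hB h.symm)
    (glue_i_le hA hB hC hA' hB' h)
  obtain ⟨h1, h2, h3⟩ := glue_filter hA hB hC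
  obtain ⟨h1', h2', h3'⟩ := glue_filter hA' hB' hC'
  rw [← h] at h1' h2' h3'
  exact ⟨rfl, rfl, h1.trans h1'.symm, h2.trans h2'.symm, h3.trans h3'.symm⟩

theorem exists_glue {a b : ℕ} {T : Finset (ℕ × ℕ)} (hT : NCT a b T) (hab : a < b) :
    ∃ i v A B C, NCT a i A ∧ NCT (i + 1) v B ∧ NCT v b C ∧ T = glue a v A B C := by
  classical
  -- the largest neighbour of `a`
  obtain ⟨v, hv, hvmax⟩ : ∃ v, (a, v) ∈ T ∧ ∀ w, (a, w) ∈ T → w ≤ v := by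
    have hne : (T.filter (fun e => e.1 = a)).Nonempty := by
      by_contra hne
      rw [Finset.not_nonempty_iff_eq_empty, Finset.filter_eq_empty_iff] at hne
      have := hT.conn b hab.le le_rfl (fun y => y = a) rfl (fun c d h => by
        have := hT.range c d h
        have := hne h
        simp only at this
        omega)
      omega
    obtain ⟨⟨a', v⟩, he, hm⟩ := Finset.exists_max_image _ Prod.snd hne
    simp only [Finset.mem_filter] at he hm
    obtain ⟨he, rfl⟩ := he
    exact ⟨v, he, fun w hw => hm (a', w) ⟨hw, rfl⟩⟩
  have hrv := hT.range _ _ hv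
  have hcard := hT.card
  set T' := T.erase (a, v) with hT'
  have hc' : T'.card + 1 = T.card := Finset.card_erase_add_one hv
  have sub : ∀ e, e ∈ T' → e ∈ T := fun e h => Finset.mem_of_mem_erase h
  have cases' : ∀ e, e ∈ T → e = (a, v) ∨ e ∈ T' := by
    intro e he
    by_cases h : e = (a, v)
    · exact Or.inl h
    · exact Or.inr (Finset.mem_erase.2 ⟨h, he⟩)
  have hor : ∀ x, a ≤ x → x ≤ b → Conn T' a x ∨ Conn T' v x := by
    intro x h1 h2
    refine hT.conn x h1 h2 (fun x => Conn T' a x ∨ Conn T' v x) (Or.inl (Conn.refl _ _)) ?_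
    intro c d hcd
    rcases cases' _ hcd with h | h
    · simp only [Prod.mk.injEq] at h
      obtain ⟨rfl, rfl⟩ := h
      exact ⟨fun _ => Or.inr (Conn.refl _ _), fun _ => Or.inl (Conn.refl _ _)⟩
    · exact or_congr (conn_edge h) (conn_edge h)
  have hav : ¬ Conn T' a v := by
    intro h
    have := card_ge (E := T') hab.le (fun c d h => hT.range c d (sub _ h)) (fun x h1 h2 => by
      rcases hor x h1 h2 with h' | h'
      · exact h'
      · exact h.trans h')
    omega
  obtain ⟨i, ⟨hai, hiv, hci⟩, himax⟩ : ∃ i, (a ≤ i ∧ i < v ∧ Conn T' a i) ∧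
      ∀ j, i < j → j ≤ v → ¬ Conn T' a j := by
    have hne : ((Finset.Ico a v).filter (fun j => Conn T' a j)).Nonempty :=
      ⟨a, by simp [Conn.refl, hrv.2.1]⟩
    obtain ⟨i, hi, hm⟩ := Finset.exists_max_image _ id hne
    simp only [Finset.mem_filter, Finset.mem_Ico, id] at hi hm
    refine ⟨i, ⟨hi.1.1, hi.1.2, hi.2⟩, ?_⟩
    intro j hj hjv hcj
    rcases Nat.lt_or_eq_of_le hjv with h | rfl
    · have := hm j ⟨⟨by omega, h⟩, hcj⟩; omega
    · exact hav hcj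
  have ev : ∀ c d, (c, d) ∈ T' → d ≤ v ∨ v ≤ c := by
    intro c d h
    by_contra hcon
    have h1 := hT.nc _ _ _ _ hv (sub _ h)
    have h2 := hT.range _ _ (sub _ h)
    have : c = a := by omega
    subst this
    have := hvmax d (sub _ h)
    omega
  have ei : ∀ c d, (c, d) ∈ T' → d ≤ i ∨ i < c := by
    intro c d h
    by_contra hcon
    push Not at hcon
    have hdv : d ≤ v := by have := ev c d h; omega
    have hd : ¬ Conn T' a d := himax d (by omega) hdv
    have hc : ¬ Conn T' a c := fun h' => hd ((conn_edge h).1 h')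
    have hca : c ≠ a := by rintro rfl; exact hc (Conn.refl _ _)
    have hcii : c ≠ i := by rintro rfl; exact hc hci
    have hrc := hT.range _ _ (sub _ h)
    have := hci (fun x => Conn T' a x ∧ (x < c ∨ d < x)) ⟨Conn.refl _ _, by omega⟩ (by
      intro x y hxy
      rw [conn_edge hxy]
      refine and_congr_right (fun hy => ?_)
      have hx := (conn_edge hxy).2 hy
      have n1 : x ≠ c := by rintro rfl; exact hc hx
      have n2 : x ≠ d := by rintro rfl; exact hd hx
      have n3 : y ≠ c := by rintro rfl; exact hc hy
      have n4 : y ≠ d := by rintro rfl; exact hd hy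
      have := hT.nc _ _ _ _ (sub _ h) (sub _ hxy)
      have := hT.nc _ _ _ _ (sub _ hxy) (sub _ h)
      have := hT.range _ _ (sub _ hxy)
      omega)
    omega
  set A := T'.filter (fun e => e.2 ≤ i) with hA
  set B := T'.filter (fun e => i < e.1 ∧ e.2 ≤ v) with hB
  set C := T'.filter (fun e => v ≤ e.1) with hC
  have mA : ∀ c d, (c, d) ∈ A ↔ (c, d) ∈ T' ∧ d ≤ i := by simp [hA]
  have mB : ∀ c d, (c, d) ∈ B ↔ (c, d) ∈ T' ∧ i < c ∧ d ≤ v := by simp [hB]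
  have mC : ∀ c d, (c, d) ∈ C ↔ (c, d) ∈ T' ∧ v ≤ c := by simp [hC]
  have rA : ∀ c d, (c, d) ∈ A → a ≤ c ∧ c < d ∧ d ≤ i := by
    intro c d h
    rw [mA] at h
    have := hT.range _ _ (sub _ h.1)
    omega
  have rB : ∀ c d, (c, d) ∈ B → i + 1 ≤ c ∧ c < d ∧ d ≤ v := by
    intro c d h
    rw [mB] at h
    have := hT.range _ _ (sub _ h.1)
    omega
  have rC : ∀ c d, (c, d) ∈ C → v ≤ c ∧ c < d ∧ d ≤ b := by
    intro c d h
    rw [mC] at h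
    have := hT.range _ _ (sub _ h.1)
    omega
  have tri : ∀ c d, (c, d) ∈ T' → (c, d) ∈ A ∨ (c, d) ∈ B ∨ (c, d) ∈ C := by
    intro c d h
    rw [mA, mB, mC]
    have := ev c d h
    have := ei c d h
    simp only [h, true_and]
    omega
  have cA : ∀ x, a ≤ x → x ≤ i → Conn A a x := by
    intro x h1 h2 P ha hP
    have hx : Conn T' a x := by
      rcases hor x h1 (by omega) with h | h
      · exact h
      · exfalso
        have := h (fun y => i < y) hiv (fun c d hcd => by
          have := ei c d hcd
          have := hT.range _ _ (sub _ hcd)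
          omega)
        omega
    refine hx (fun y => y ≤ i → P y) (fun _ => ha) ?_ h2
    intro c d hcd
    have := hT.range _ _ (sub _ hcd)
    rcases ei c d hcd with h | h
    · have := hP c d ((mA _ _).2 ⟨hcd, h⟩)
      have h1 : c ≤ i := by omega
      simp [h, h1, this]
    · have h1 : ¬ c ≤ i := by omega
      have h2 : ¬ d ≤ i := by omega
      simp [h1, h2]
  have cB' : ∀ x, i + 1 ≤ x → x ≤ v → Conn B v x := by
    intro x h1 h2 P hv hP
    have hx : Conn T' v x := by
      rcases hor x (by omega) (by omega) with h | h
      · exact absurd h (himax x (by omega) h2)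
      · exact h
    have := hx (fun y => i < y → P (min y v)) (fun _ => by simpa using hv) (by
      intro c d hcd
      have hr := hT.range _ _ (sub _ hcd)
      rcases tri c d hcd with h | h | h
      · have := rA _ _ h
        have h1 : ¬ i < c := by omega
        have h2 : ¬ i < d := by omega
        simp [h1, h2]
      · have := rB _ _ h
        have h1 : i < c := by omega
        have h2 : i < d := by omega
        have h3 : min c v = c := by omega
        have h4 : min d v = d := by omega
        simp only [h1, h2, h3, h4, forall_const]
        exact hP c d h
      · have := rC _ _ h
        have h3 : min c v = v := by omega
        have h4 : min d v = v := by omega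
        simp [h3, h4, hv]) (by omega)
    rwa [min_eq_left h2] at this
  have cB : ∀ x, i + 1 ≤ x → x ≤ v → Conn B (i + 1) x := fun x h1 h2 =>
    (cB' (i + 1) le_rfl (by omega)).symm.trans (cB' x h1 h2)
  have cC : ∀ x, v ≤ x → x ≤ b → Conn C v x := by
    intro x h1 h2 P hPv hP
    have := hT.conn x (by omega) h2 (fun y => P (max y v)) (by
      have : max a v = v := by omega
      simpa [this] using hPv) (by
      intro c d hcd
      have hr := hT.range _ _ hcd
      by_cases h : d ≤ v
      · have h3 : max c v = v := by omega
        have h4 : max d v = v := by omega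
        simp [h3, h4]
      · rcases cases' _ hcd with h' | h'
        · simp only [Prod.mk.injEq] at h'; omega
        · have h5 := ev c d h'
          have h6 : v ≤ c := by omega
          have h3 : max c v = c := by omega
          have h4 : max d v = d := by omega
          simp only [h3, h4]
          exact hP c d ((mC _ _).2 ⟨h', h6⟩))
    rwa [max_eq_left h1] at this
  have d1 : Disjoint A B := by
    rw [Finset.disjoint_left]
    rintro ⟨c, d⟩ h h'
    have := rA _ _ h; have := rB _ _ h'; omega
  have d2 : Disjoint (A ∪ B) C := by
    rw [Finset.disjoint_left]
    rintro ⟨c, d⟩ h h'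
    have := rC _ _ h'
    rcases Finset.mem_union.1 h with h | h
    · have := rA _ _ h; omega
    · have := rB _ _ h; omega
  have hU : T' = A ∪ B ∪ C := by
    ext ⟨c, d⟩
    simp only [Finset.mem_union, or_assoc]
    refine ⟨tri c d, ?_⟩
    rw [mA, mB, mC]
    tauto
  have hcU : T'.card = A.card + B.card + C.card := by
    rw [hU, Finset.card_union_of_disjoint d2, Finset.card_union_of_disjoint d1]
  have gA := card_ge hai rA cA
  have gB := card_ge (by omega) rB cB
  have gC := card_ge hrv.2.2 rC cC
  refine ⟨i, v, A, B, C, ⟨rA, ?_, cA, by omega⟩, ⟨rB, ?_, cB, by omega⟩,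
    ⟨rC, ?_, cC, by omega⟩, ?_⟩
  · intro c d c' d' h h'
    exact hT.nc _ _ _ _ (sub _ ((mA _ _).1 h).1) (sub _ ((mA _ _).1 h').1)
  · intro c d c' d' h h'
    exact hT.nc _ _ _ _ (sub _ ((mB _ _).1 h).1) (sub _ ((mB _ _).1 h').1)
  · intro c d c' d' h h'
    exact hT.nc _ _ _ _ (sub _ ((mC _ _).1 h).1) (sub _ ((mC _ _).1 h').1)
  · rw [glue, ← hU, hT', Finset.insert_erase hv]

open Classical in
/-- The finite set of noncrossing trees on `[a,b]`. -/
noncomputable def TT (a b : ℕ) : Finset (Finset (ℕ × ℕ)) :=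
  (Finset.Icc a b ×ˢ Finset.Icc a b).powerset.filter (NCT a b)

theorem mem_TT {a b : ℕ} {E : Finset (ℕ × ℕ)} : E ∈ TT a b ↔ NCT a b E := by
  classical
  simp only [TT, Finset.mem_filter, Finset.mem_powerset, and_iff_right_iff_imp]
  rintro h ⟨c, d⟩ hcd
  have := h.range _ _ hcd
  simp
  omega

theorem TT_zero (a : ℕ) : (TT a a).card = 1 := by
  rw [Finset.card_eq_one]
  refine ⟨∅, ?_⟩
  ext E
  rw [mem_TT, Finset.mem_singleton]
  constructor
  · intro h
    have := h.card
    rw [← Finset.card_eq_zero]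
    omega
  · rintro rfl
    refine ⟨by simp, by simp, ?_, by simp⟩
    intro x h1 h2
    obtain rfl : a = x := by omega
    exact Conn.refl _ _

theorem TT_succ (a n : ℕ) : (TT a (a + n + 1)).card =
    ∑ p ∈ Finset.HasAntidiagonal.antidiagonal n, ∑ q ∈ Finset.HasAntidiagonal.antidiagonal p.1,
      (TT a (a + q.1)).card * ((TT (a + q.1 + 1) (a + q.1 + 1 + q.2)).card *
        (TT (a + p.1 + 1) (a + p.1 + 1 + p.2)).card) := by
  classical
  simp_rw [← Finset.card_product]
  simp_rw [← Finset.card_sigma]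
  symm
  refine Finset.card_bij (fun x _ => glue a (a + x.1.1 + 1) x.2.2.1 x.2.2.2.1 x.2.2.2.2) ?_ ?_ ?_
  · rintro ⟨⟨p1, p2⟩, ⟨⟨q1, q2⟩, ⟨A, B, C⟩⟩⟩ h
    simp only [Finset.mem_sigma, Finset.HasAntidiagonal.mem_antidiagonal, Finset.mem_product, mem_TT] at h ⊢
    obtain ⟨hp, hq, hA, hB, hC⟩ := h
    have e1 : a + q1 + 1 + q2 = a + p1 + 1 := by omega
    have e2 : a + p1 + 1 + p2 = a + n + 1 := by omega
    rw [e1] at hB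
    rw [e2] at hC
    exact glue_nct hA hB hC
  · rintro ⟨⟨p1, p2⟩, ⟨⟨q1, q2⟩, ⟨A, B, C⟩⟩⟩ h ⟨⟨p1', p2'⟩, ⟨⟨q1', q2'⟩, ⟨A', B', C'⟩⟩⟩ h' hg
    simp only [Finset.mem_sigma, Finset.HasAntidiagonal.mem_antidiagonal, Finset.mem_product, mem_TT] at h h' hg
    obtain ⟨hp, hq, hA, hB, hC⟩ := h
    obtain ⟨hp', hq', hA', hB', hC'⟩ := h'
    have e1 : a + q1 + 1 + q2 = a + p1 + 1 := by omega
    have e2 : a + p1 + 1 + p2 = a + n + 1 := by omega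
    have e1' : a + q1' + 1 + q2' = a + p1' + 1 := by omega
    have e2' : a + p1' + 1 + p2' = a + n + 1 := by omega
    rw [e1] at hB
    rw [e2] at hC
    rw [e1'] at hB'
    rw [e2'] at hC'
    obtain ⟨h1, h2, rfl, rfl, rfl⟩ := glue_inj hA hB hC hA' hB' hC' hg
    obtain rfl : q1 = q1' := by omega
    obtain rfl : p1 = p1' := by omega
    obtain rfl : q2 = q2' := by omega
    obtain rfl : p2 = p2' := by omega
    rfl
  · intro T hT
    rw [mem_TT] at hT
    obtain ⟨i, v, A, B, C, hA, hB, hC, rfl⟩ := exists_glue hT (by omega)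
    have hcA := hA.card
    have hcB := hB.card
    have hcC := hC.card
    obtain ⟨q1, rfl⟩ : ∃ q1, i = a + q1 := ⟨i - a, by omega⟩
    obtain ⟨q2, rfl⟩ : ∃ q2, v = a + q1 + 1 + q2 := ⟨v - (a + q1 + 1), by omega⟩
    obtain ⟨p2, hp2⟩ : ∃ p2, n = q1 + q2 + p2 := ⟨n - (q1 + q2), by omega⟩
    have e1 : a + (q1 + q2) + 1 = a + q1 + 1 + q2 := by omega
    have e2 : a + q1 + 1 + q2 + p2 = a + n + 1 := by omega
    refine ⟨⟨(q1 + q2, p2), ⟨(q1, q2), (A, B, C)⟩⟩, ?_, ?_⟩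
    · simp only [Finset.mem_sigma, Finset.HasAntidiagonal.mem_antidiagonal, Finset.mem_product, mem_TT]
      rw [e1, e2]
      exact ⟨hp2.symm, trivial, hA, hB, hC⟩
    · simp only [e1]

theorem TT_shift (n : ℕ) : ∀ a, (TT a (a + n)).card = (TT 0 n).card := by
  induction n using Nat.strong_induction_on with
  | _ n ih =>
    intro a
    rcases n with _ | n
    · simp [TT_zero]
    · have h0 := TT_succ 0 n
      rw [← add_assoc, TT_succ]
      simp only [zero_add] at h0
      rw [h0]
      refine Finset.sum_congr rfl (fun p hp => Finset.sum_congr rfl (fun q hq => ?_))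
      rw [Finset.HasAntidiagonal.mem_antidiagonal] at hp hq
      rw [ih q.1 (by omega), ih q.2 (by omega), ih p.2 (by omega), ih q.2 (by omega),
        ih p.2 (by omega)]

theorem TT_rec (n : ℕ) : (TT 0 (n + 1)).card =
    ∑ p ∈ Finset.HasAntidiagonal.antidiagonal n, ∑ q ∈ Finset.HasAntidiagonal.antidiagonal p.1,
      (TT 0 q.1).card * ((TT 0 q.2).card * (TT 0 p.2).card) := by
  have h0 := TT_succ 0 n
  simp only [zero_add] at h0
  rw [h0]
  refine Finset.sum_congr rfl (fun p hp => Finset.sum_congr rfl (fun q hq => ?_))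
  rw [TT_shift, TT_shift]

section numeric
open PowerSeries

/-- A coefficient sequence obeying the ternary recursion has the Fuss-Catalan closed form. -/
theorem fuss (t : ℕ → ℕ) (h0 : t 0 = 1) (hs : ∀ n, t (n + 1) =
    ∑ p ∈ Finset.HasAntidiagonal.antidiagonal n, ∑ q ∈ Finset.HasAntidiagonal.antidiagonal p.1, t q.1 * (t q.2 * t p.2)) (n : ℕ) :
    (2 * n + 1) * t n = (3 * n).choose n := by
  let T : PowerSeries ℕ := PowerSeries.mk t
  have hT : T = 1 + X * T ^ 3 := by
    ext n
    rcases n with _ | n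
    · simp [T, h0]
    · rw [map_add, PowerSeries.coeff_succ_X_mul, pow_succ, pow_two, PowerSeries.coeff_mul]
      simp_rw [PowerSeries.coeff_mul]
      simp only [T, PowerSeries.coeff_mk, PowerSeries.coeff_one]
      simp [hs, Finset.sum_mul, mul_assoc]
  have hrec : ∀ r n, coeff (n + 1) (T ^ (r + 1)) = coeff (n + 1) (T ^ r) + coeff n (T ^ (r + 3)) := by
    intro r n
    have : T ^ (r + 1) = T ^ r + X * T ^ (r + 3) := by
      calc T ^ (r + 1) = T ^ r * T := pow_succ _ _
        _ = T ^ r * (1 + X * T ^ 3) := by rw [← hT]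
        _ = T ^ r + X * T ^ (r + 3) := by ring
    rw [this, map_add, PowerSeries.coeff_succ_X_mul]
  have hz : ∀ r, coeff 0 (T ^ r) = 1 := by
    intro r
    simp [T, h0]
  have main : ∀ n r, (3 * n + r) * coeff n (T ^ r) = r * (3 * n + r).choose n := by
    intro n
    induction n with
    | zero => intro r; simp [hz]
    | succ n ih =>
      intro r
      induction r with
      | zero => simp
      | succ r ihr =>
        rw [hrec]
        have h2 := ih (r + 3)
        have hx := Nat.choose_succ_right_eq (3 * n + r + 3) n
        have e1 : 3 * n + r + 3 - n = 2 * n + r + 3 := by omega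
        have e2 : 3 * (n + 1) + r = 3 * n + r + 3 := by ring
        have e3 : 3 * (n + 1) + (r + 1) = 3 * n + r + 3 + 1 := by ring
        have e4 : 3 * n + (r + 3) = 3 * n + r + 3 := by ring
        rw [e1] at hx
        rw [e2] at ihr
        rw [e4] at h2
        rw [e3, Nat.choose_succ_succ]
        simp only [Nat.succ_eq_add_one]
        generalize coeff (n + 1) (T ^ r) = c1 at *
        generalize coeff n (T ^ (r + 3)) = c2 at *
        generalize (3 * n + r + 3).choose (n + 1) = x at *
        generalize (3 * n + r + 3).choose n = y at *
        apply Nat.eq_of_mul_eq_mul_left (show 0 < 3 * n + r + 3 by omega)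
        zify at *
        linear_combination (3 * n + r + 4 : ℤ) * ihr + (3 * n + r + 4 : ℤ) * h2 - 3 * hx
  have := main n 1
  simp only [pow_one, T, PowerSeries.coeff_mk, one_mul] at this
  have h2 := Nat.choose_mul_succ_eq (3 * n) n
  have e : 3 * n + 1 - n = 2 * n + 1 := by omega
  rw [e, ← this] at h2
  apply Nat.eq_of_mul_eq_mul_left (show 0 < 3 * n + 1 by omega)
  linarith
end numeric

end NCTree

namespace NCTree

/-- Sorted coordinates of a chord. -/
def sortPair {n : ℕ} (e : Sym2 (Fin (n + 1))) : ℕ × ℕ := (e.inf.val, e.sup.val)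

theorem sortPair_injective {n : ℕ} : Function.Injective (sortPair (n := n)) := by
  intro s t h
  simp only [sortPair, Prod.mk.injEq, Fin.val_inj] at h
  exact Sym2.inf_eq_inf_and_sup_eq_sup.1 h

theorem sortPair_mk {n : ℕ} {x y : Fin (n + 1)} (h : x ≤ y) : sortPair s(x, y) = (x.val, y.val) := by
  simp [sortPair, h]

theorem exists_sorted {n : ℕ} (e : Sym2 (Fin (n + 1))) : ∃ x y, x ≤ y ∧ e = s(x, y) := by
  induction e with | _ a b
  rcases le_total a b with h | h
  · exact ⟨a, b, h, rfl⟩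
  · exact ⟨b, a, h, Sym2.eq_swap⟩

theorem mem_image_sort {n : ℕ} {C : Finset (Sym2 (Fin (n + 1)))} {c d : ℕ} :
    (c, d) ∈ C.image sortPair ↔ ∃ x y : Fin (n + 1), x ≤ y ∧ x.val = c ∧ y.val = d ∧ s(x, y) ∈ C := by
  rw [Finset.mem_image]
  constructor
  · rintro ⟨e, he, h⟩
    obtain ⟨x, y, hxy, rfl⟩ := exists_sorted e
    rw [sortPair_mk hxy, Prod.mk.injEq] at h
    exact ⟨x, y, hxy, h.1, h.2, he⟩
  · rintro ⟨x, y, hxy, rfl, rfl, h⟩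
    exact ⟨_, h, sortPair_mk hxy⟩

theorem acyclic_iff {n : ℕ} {C : Finset (Sym2 (Fin (n + 1)))} (hc : C.card = n)
    (hd : ∀ e ∈ C, ¬ e.IsDiag) :
    (SimpleGraph.fromEdgeSet (↑C : Set (Sym2 (Fin (n + 1))))).IsAcyclic ↔
    (SimpleGraph.fromEdgeSet (↑C : Set (Sym2 (Fin (n + 1))))).Connected := by
  classical
  set G := SimpleGraph.fromEdgeSet (↑C : Set (Sym2 (Fin (n + 1)))) with hG
  have hE : G.edgeSet = (↑C : Set (Sym2 (Fin (n + 1)))) := by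
    rw [hG, SimpleGraph.edgeSet_fromEdgeSet]
    ext e
    simp only [Set.mem_sdiff, Finset.mem_coe]
    constructor
    · exact fun h => h.1
    · exact fun h => ⟨h, hd e h⟩
  have hcard : Nat.card G.edgeSet + 1 = Nat.card (Fin (n + 1)) := by
    rw [hE]; simp [hc]
  constructor
  · intro h
    obtain ⟨T, hGT, -, hT⟩ := SimpleGraph.Connected.exists_isTree_le_of_le_of_isAcyclic
      (G := (⊤ : SimpleGraph (Fin (n + 1)))) SimpleGraph.connected_top (H := G) le_top h
    have h2 := (SimpleGraph.isTree_iff_connected_and_card.1 hT).2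
    have h3 : G.edgeSet = T.edgeSet := by
      apply Set.eq_of_subset_of_ncard_le (SimpleGraph.edgeSet_mono hGT)
      · rw [← Nat.card_coe_set_eq, ← Nat.card_coe_set_eq]; omega
    rw [SimpleGraph.edgeSet_inj.1 h3]
    exact hT.connected
  · intro h
    exact (SimpleGraph.isTree_iff_connected_and_card.2 ⟨h, hcard⟩).isAcyclic

theorem connected_iff {n : ℕ} {C : Finset (Sym2 (Fin (n + 1)))} (hd : ∀ e ∈ C, ¬ e.IsDiag) :
    (SimpleGraph.fromEdgeSet (↑C : Set (Sym2 (Fin (n + 1))))).Connected ↔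
    ∀ x, 0 ≤ x → x ≤ n → Conn (C.image sortPair) 0 x := by
  set G := SimpleGraph.fromEdgeSet (↑C : Set (Sym2 (Fin (n + 1)))) with hG
  constructor
  · intro h x _ hx P h0 hP
    obtain ⟨w⟩ := h.preconnected ⟨0, by omega⟩ ⟨x, by omega⟩
    have : ∀ u v : Fin (n + 1), G.Walk u v → P u → P v := by
      intro u v w
      induction w with
      | nil => exact id
      | @cons u v w hadj _ ih =>
        intro hu
        apply ih
        rw [hG, SimpleGraph.fromEdgeSet_adj] at hadj
        rcases le_total u v with huv | huv
        · exact (hP _ _ (mem_image_sort.2 ⟨u, v, huv, rfl, rfl, hadj.1⟩)).1 hu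
        · refine (hP _ _ (mem_image_sort.2 ⟨v, u, huv, rfl, rfl, ?_⟩)).2 hu
          rw [Sym2.eq_swap]
          exact hadj.1
    exact this _ _ w h0
  · intro h
    rw [SimpleGraph.connected_iff_exists_forall_reachable]
    refine ⟨⟨0, by omega⟩, ?_⟩
    intro x
    have := h x.val (Nat.zero_le _) (by omega)
      (fun y => ∃ hy : y < n + 1, G.Reachable ⟨0, by omega⟩ ⟨y, hy⟩)
      ⟨by omega, SimpleGraph.Reachable.refl _⟩ (by
      intro c d hcd
      obtain ⟨x, y, hxy, rfl, rfl, he⟩ := mem_image_sort.1 hcd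
      have hadj : G.Adj x y := by
        rw [hG, SimpleGraph.fromEdgeSet_adj]
        exact ⟨he, fun h => hd _ he (by simp [h])⟩
      constructor
      · rintro ⟨_, h⟩
        exact ⟨y.2, h.trans hadj.reachable⟩
      · rintro ⟨_, h⟩
        exact ⟨x.2, h.trans hadj.symm.reachable⟩)
    exact this.2

theorem isDissection_iff {n : ℕ} {C : Finset (Sym2 (Fin (n + 1)))} :
    IsDissection C ↔ NCT 0 n (C.image sortPair) := by
  have hci : (C.image sortPair).card = C.card :=
    Finset.card_image_of_injective _ sortPair_injective
  constructor
  · rintro ⟨h1, h2, h3, h4⟩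
    refine ⟨?_, ?_, (connected_iff h2).1 ((acyclic_iff h1 h2).1 h4), by omega⟩
    · intro c d h
      obtain ⟨x, y, hxy, rfl, rfl, he⟩ := mem_image_sort.1 h
      have : x ≠ y := fun h => h2 _ he (by simp [h])
      have := lt_of_le_of_ne hxy this
      rw [Fin.lt_def] at this
      omega
    · intro c d c' d' h h' hx
      obtain ⟨x, y, hxy, rfl, rfl, he⟩ := mem_image_sort.1 h
      obtain ⟨x', y', hxy', rfl, rfl, he'⟩ := mem_image_sort.1 h'
      exact h3 _ he _ he' ⟨x, y, x', y', rfl, rfl, Or.inl hx⟩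
  · intro h
    have h1 : C.card = n := by have := h.card; omega
    have h2 : ∀ e ∈ C, ¬ e.IsDiag := by
      intro e he hdg
      obtain ⟨x, y, hxy, rfl⟩ := exists_sorted e
      have := h.range _ _ (mem_image_sort.2 ⟨x, y, hxy, rfl, rfl, he⟩)
      rw [Sym2.mk_isDiag_iff] at hdg
      subst hdg
      omega
    refine ⟨h1, h2, ?_, (acyclic_iff h1 h2).2 ((connected_iff h2).2 h.conn)⟩
    rintro _ he _ he' ⟨a, b, c, d, rfl, rfl, hx⟩
    rcases hx with hx | hx
    · exact h.nc a b c d (mem_image_sort.2 ⟨a, b, (hx.1.trans hx.2.1).le, rfl, rfl, he⟩)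
        (mem_image_sort.2 ⟨c, d, (hx.2.1.trans hx.2.2).le, rfl, rfl, he'⟩) hx
    · exact h.nc c d a b (mem_image_sort.2 ⟨c, d, (hx.1.trans hx.2.1).le, rfl, rfl, he'⟩)
        (mem_image_sort.2 ⟨a, b, (hx.2.1.trans hx.2.2).le, rfl, rfl, he⟩) hx

theorem num_eq (n : ℕ) : numDissection n = (TT 0 n).card := by
  classical
  rw [numDissection, Nat.card_eq_fintype_card, Fintype.card_subtype]
  refine Finset.card_bij (fun C _ => C.image sortPair) ?_ ?_ ?_
  · intro C hC
    rw [mem_TT, ← isDissection_iff]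
    simpa using hC
  · intro C _ C' _ h
    exact Finset.image_injective sortPair_injective h
  · intro E hE
    rw [mem_TT] at hE
    have key : (Finset.univ.filter (fun e : Sym2 (Fin (n + 1)) => sortPair e ∈ E)).image sortPair
        = E := by
      ext ⟨c, d⟩
      rw [mem_image_sort]
      constructor
      · rintro ⟨x, y, hxy, rfl, rfl, h⟩
        rw [Finset.mem_filter, sortPair_mk hxy] at h
        exact h.2
      · intro h
        have hr := hE.range _ _ h
        have hle : (⟨c, by omega⟩ : Fin (n + 1)) ≤ ⟨d, by omega⟩ := by
          rw [Fin.le_def]; exact hr.2.1.le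
        refine ⟨⟨c, by omega⟩, ⟨d, by omega⟩, hle, rfl, rfl, ?_⟩
        rw [Finset.mem_filter, sortPair_mk hle]
        exact ⟨Finset.mem_univ _, h⟩
    refine ⟨_, ?_, key⟩
    simp only [Finset.mem_filter, Finset.mem_univ, true_and]
    rw [isDissection_iff, key]
    exact hE

end NCTree

/-- the number of dissection diagrams of degree `n` equals
`(1/(2n+1))·choose (3n) n`, i.e. `(2n+1)` times this number is `choose (3n) n`. -/
theorem numDissection_eq_fussCatalan (n : ℕ) :
    (2 * n + 1) * numDissection n = (3 * n).choose n := by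
  rw [NCTree.num_eq]
  exact NCTree.fuss (fun m => (NCTree.TT 0 m).card) (NCTree.TT_zero 0) NCTree.TT_rec n
end

section
/- For every n ∈ ℕ, the integer 2n+1 divides the binomial coefficient binomial(3n, n). -/
/-- for every `n`, `2n+1` divides the binomial coefficient `choose (3n) n`. -/
theorem two_n_add_one_dvd_choose (n : ℕ) : (2 * n + 1) ∣ (3 * n).choose n := by
  have h := Nat.choose_succ_right_eq (3 * n) (2 * n)
  have hs : (3 * n).choose (2 * n) = (3 * n).choose n :=
    Nat.choose_symm_of_eq_add (by ring)
  have hn : 3 * n - 2 * n = n := by omega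
  rw [hs, hn] at h
  have hc : Nat.Coprime (2 * n + 1) n := by simp
  exact hc.dvd_of_dvd_mul_right ⟨_, by rw [← h, mul_comm]⟩
end

section
/- For every integer n ≥ 2, one has (2n+1)·Catalan(n) < binomial(3n, n); that is, the n-th Catalan number is strictly smaller than the number (1/(2n+1))·binomial(3n,n) of dissection diagrams of degree n, so for n ≥ 2 there are strictly fewer rooted forests of degree n (which are at most Catalan(n) in number) than dissection diagrams of degree n. -/
/-- for every `n ≥ 2`, `(2n+1)·Catalan(n) < choose (3n) n`;
i.e. the `n`-th Catalan number is strictly smaller than the number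
`(1/(2n+1))·choose (3n) n` of dissection diagrams of degree `n`. -/
theorem catalan_lt_fussCatalan (n : ℕ) (hn : 2 ≤ n) :
    (2 * n + 1) * catalan n < (3 * n).choose n := by
  have h1 : (n + 1) * catalan n = (2 * n).choose n := by
    rw [succ_mul_catalan_eq_centralBinom, Nat.centralBinom_eq_two_mul_choose]
  have h2 : (2 * n + 1) * (2 * n).choose n = (2 * n + 1).choose (n + 1) * (n + 1) :=
    Nat.add_one_mul_choose_eq (2 * n) n
  have h3 : (2 * n + 1) * catalan n = (2 * n + 1).choose n := by
    rw [Nat.choose_symm_half] at h2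
    apply Nat.eq_of_mul_eq_mul_left (Nat.succ_pos n)
    rw [← h1] at h2
    simp only [Nat.succ_eq_add_one]
    linarith
  rw [h3]
  have h5 : (2 * n + 2).choose n ≤ (3 * n).choose n :=
    Nat.choose_le_choose n (by omega)
  refine lt_of_lt_of_le ?_ h5
  obtain ⟨m, rfl⟩ : ∃ m, n = m + 1 := ⟨n - 1, by omega⟩
  have h6 := Nat.choose_succ_succ (2 * (m + 1) + 1) m
  have h7 : 0 < (2 * (m + 1) + 1).choose m := Nat.choose_pos (by omega)
  simp only [Nat.succ_eq_add_one] at h6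
  have h8 : 2 * (m + 1) + 2 = 2 * (m + 1) + 1 + 1 := rfl
  rw [h8, h6]
  omega
end
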